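/- arXiv:1708.01588 — 2 statements merged into one kernel-verified Lean document; each statement's English description precedes it below -/
import Mathlib

section
/- Let σ > 0, let α, β ∈ ℝ with |β| ≤ 1/2, and set m(t) = α + β·1_{[−1,1]}(t). Suppose g : [−σ, σ] → ℝ is bounded and measurable and satisfies g(x) = 1 − ∫_{−σ}^{σ} m(x − y) g(y) dy for all x ∈ [−σ, σ]. Then g is Lipschitz continuous on [−σ, σ] with Lipschitz constant at most sup_{y ∈ [−σ,σ]} |g(y)|: for all x₁, x₂ ∈ [−σ, σ], |g(x₁) − g(x₂)| ≤ (sup_{y ∈ [−σ,σ]} |g(y)|)·|x₁ − x₂|. -/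
open MeasureTheory

/-!
Subtracting the equations at `x₁` and `x₂` cancels the constant `1` and the part `α` of the kernel,
leaving `-β ∫ (1_{|x₁ - y| ≤ 1} - 1_{|x₂ - y| ≤ 1}) g y dy`. For `x₂ ≤ x₁` the difference of
indicators is bounded by the sum of the indicators of `[x₂ - 1, x₁ - 1]` and `[x₂ + 1, x₁ + 1]`,
whose total length is `2 (x₁ - x₂)`; the factor `2` is absorbed by `|β| ≤ 1 / 2`.
-/

/-- For `b ≤ a`, the windows `[a - 1, a + 1]` and `[b - 1, b + 1]` differ only near the two pairs of
corresponding endpoints. -/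
lemma abs_window_sub_le (a b y : ℝ) (hab : b ≤ a) :
    |Set.indicator (Set.Icc (-1 : ℝ) 1) (fun _ => (1 : ℝ)) (a - y)
      - Set.indicator (Set.Icc (-1 : ℝ) 1) (fun _ => (1 : ℝ)) (b - y)|
      ≤ Set.indicator (Set.Icc (b + -1) (a + -1)) (fun _ => (1 : ℝ)) y
        + Set.indicator (Set.Icc (b + 1) (a + 1)) (fun _ => (1 : ℝ)) y := by
  simp only [Set.indicator_apply, Set.mem_Icc]
  split_ifs <;> first | (norm_num; done) | (exfalso; grind)

/-- Lipschitz continuity of the optimal `g`: if `m = α + β·1_{[-1,1]}` with `|β| ≤ 1/2`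
and the bounded measurable `g` solves `g x = 1 - ∫_{-σ}^{σ} m(x-y) g(y) dy` on
`[-σ, σ]`, then `|g x₁ - g x₂| ≤ (sup_{[-σ,σ]} |g|) |x₁ - x₂|`. -/
theorem optimal_g_lipschitz (σ : ℝ) (hσ : 0 < σ) (α β : ℝ) (hβ : |β| ≤ 1 / 2)
    (m : ℝ → ℝ)
    (hm : m = fun t => α + β * Set.indicator (Set.Icc (-1 : ℝ) 1) (fun _ => (1 : ℝ)) t)
    (g : ℝ → ℝ) (hg_meas : Measurable g) (hg_bdd : ∃ C : ℝ, ∀ y ∈ Set.Icc (-σ) σ, |g y| ≤ C)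
    (hgeq : ∀ x ∈ Set.Icc (-σ) σ, g x = 1 - ∫ y in (-σ)..σ, m (x - y) * g y) :
    ∀ x₁ ∈ Set.Icc (-σ) σ, ∀ x₂ ∈ Set.Icc (-σ) σ,
      |g x₁ - g x₂| ≤ (sSup ((fun y => |g y|) '' Set.Icc (-σ) σ)) * |x₁ - x₂| := by
  have hbdd : BddAbove ((fun y => |g y|) '' Set.Icc (-σ) σ) := by
    obtain ⟨C, hC⟩ := hg_bdd
    refine ⟨C, ?_⟩
    rintro _ ⟨y, hy, rfl⟩
    exact hC y hy
  set M := sSup ((fun y => |g y|) '' Set.Icc (-σ) σ) with hM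
  have hgM : ∀ y ∈ Set.Icc (-σ) σ, |g y| ≤ M := fun y hy => le_csSup hbdd ⟨y, hy, rfl⟩
  have hM0 : 0 ≤ M := (abs_nonneg _).trans (hgM σ ⟨by linarith, le_rfl⟩)
  have hσ' : -σ ≤ σ := by linarith
  have hm_meas : Measurable m := by
    rw [hm]
    exact measurable_const.add
      (measurable_const.mul (measurable_const.indicator measurableSet_Icc))
  have hm_bdd : ∀ t, |m t| ≤ |α| + |β| := by
    intro t
    rw [hm]
    refine (abs_add_le _ _).trans ?_
    rw [abs_mul]
    gcongr
    refine mul_le_of_le_one_right (abs_nonneg _) ?_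
    rw [Set.indicator_apply]
    split_ifs <;> norm_num
  have hint : ∀ x, IntegrableOn (fun y => m (x - y) * g y) (Set.Ioc (-σ) σ) := by
    intro x
    refine Measure.integrableOn_of_bounded (M := (|α| + |β|) * M) (by simp)
      ((hm_meas.comp (measurable_const.sub measurable_id)).mul hg_meas).aestronglyMeasurable ?_
    refine (ae_restrict_iff' measurableSet_Ioc).2 (Filter.Eventually.of_forall fun y hy => ?_)
    rw [Real.norm_eq_abs, abs_mul]
    exact mul_le_mul (hm_bdd _) (hgM y (Set.Ioc_subset_Icc_self hy)) (abs_nonneg _) (by positivity)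
  have key : ∀ a ∈ Set.Icc (-σ) σ, ∀ b ∈ Set.Icc (-σ) σ, b ≤ a →
      |g a - g b| ≤ M * (a - b) := by
    intro a ha b hb hab
    have hdiff : g a - g b = -∫ y in Set.Ioc (-σ) σ, (m (a - y) * g y - m (b - y) * g y) := by
      rw [integral_sub (hint a) (hint b), hgeq a ha, hgeq b hb,
        intervalIntegral.integral_of_le hσ', intervalIntegral.integral_of_le hσ']
      ring
    have hI : ∀ c : ℝ, Integrable
        (Set.indicator (Set.Icc (b + c) (a + c)) (fun _ => (1 : ℝ))) volume := fun c =>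
      (integrable_indicator_iff measurableSet_Icc).2
        (integrableOn_const (by simp))
    have hIv : ∀ c : ℝ,
        ∫ y, Set.indicator (Set.Icc (b + c) (a + c)) (fun _ => (1 : ℝ)) y = a - b := by
      intro c
      rw [integral_indicator measurableSet_Icc, setIntegral_const, measureReal_def,
        Real.volume_Icc, ENNReal.toReal_ofReal (by linarith), smul_eq_mul]
      ring
    let B : ℝ → ℝ := fun y => M / 2 *
      (Set.indicator (Set.Icc (b + -1) (a + -1)) (fun _ => (1 : ℝ)) y
        + Set.indicator (Set.Icc (b + 1) (a + 1)) (fun _ => (1 : ℝ)) y)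
    have hBint : Integrable B volume := ((hI (-1)).add (hI 1)).const_mul _
    have hB0 : ∀ y, 0 ≤ B y := fun y => mul_nonneg (by positivity)
      (add_nonneg (Set.indicator_nonneg (fun _ _ => zero_le_one) _)
        (Set.indicator_nonneg (fun _ _ => zero_le_one) _))
    have hBv : ∫ y, B y = M * (a - b) := by
      simp only [B]
      rw [integral_const_mul, integral_add (hI (-1)) (hI 1), hIv, hIv]
      ring
    rw [hdiff, abs_neg, ← Real.norm_eq_abs, ← hBv]
    refine (norm_integral_le_of_norm_le hBint.integrableOn ?_).trans
      (setIntegral_le_integral hBint (Filter.Eventually.of_forall hB0))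
    refine (ae_restrict_iff' measurableSet_Ioc).2 (Filter.Eventually.of_forall fun y hy => ?_)
    have h1 := abs_window_sub_le a b y hab
    have h2 := hgM y (Set.Ioc_subset_Icc_self hy)
    have h3 : m (a - y) * g y - m (b - y) * g y
        = β * (Set.indicator (Set.Icc (-1 : ℝ) 1) (fun _ => (1 : ℝ)) (a - y)
          - Set.indicator (Set.Icc (-1 : ℝ) 1) (fun _ => (1 : ℝ)) (b - y)) * g y := by
      rw [hm]
      ring
    rw [h3, Real.norm_eq_abs, abs_mul, abs_mul]
    have h4 := (abs_nonneg _).trans h1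
    refine (mul_le_mul (mul_le_mul hβ h1 (abs_nonneg _) (by norm_num)) h2 (abs_nonneg _)
      (mul_nonneg (by norm_num) h4)).trans_eq ?_
    simp only [B]
    ring
  intro x₁ h₁ x₂ h₂
  rcases le_total x₂ x₁ with h | h
  · rw [abs_of_nonneg (sub_nonneg.2 h)]
    exact key x₁ h₁ x₂ h₂ h
  · rw [abs_sub_comm, abs_sub_comm x₁, abs_of_nonneg (sub_nonneg.2 h)]
    exact key x₂ h₂ x₁ h₁ h
end

section
/- Let β ∈ {1/2, −1/2}, let c ∈ ℝ, and let g : [−1, 1] → ℝ be continuous and even (g(−x) = g(x)) such that g(x) + β·∫_{x−1}^{1} g(y) dy = c for all x ∈ (0, 1). Then g is twice differentiable on (0, 1) and satisfies the delay differential equation g′(x) = β·g(1 − x) and the ordinary differential equation g″(x) + (1/4)·g(x) = 0 for all x ∈ (0, 1). -/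
/-!
Differentiating the integral equation by the fundamental theorem of calculus at the lower limit
`x - 1 ∈ (-1, 0)` gives `g' x = β g (x - 1)`, which is `β g (1 - x)` by evenness. Since `x ↦ 1 - x`
preserves `(0, 1)`, this identity can be differentiated once more, and
`g'' x = -β g' (1 - x) = -β² g x` with `β² = 1/4`.
-/

open MeasureTheory

/-- For `β = ±1/2`, an even continuous `g` on `[-1,1]` with
`g x + β ∫_{x-1}^{1} g(y) dy = c` on `(0,1)` is twice differentiable on `(0,1)` and
satisfies `g'(x) = β g(1-x)` and `g''(x) + (1/4) g(x) = 0` there. -/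
theorem delay_ode_sigma_one (β : ℝ) (hβ : β = 1 / 2 ∨ β = -(1 / 2)) (c : ℝ)
    (g : ℝ → ℝ) (hg_cont : ContinuousOn g (Set.Icc (-1 : ℝ) 1))
    (hg_even : ∀ x ∈ Set.Icc (-1 : ℝ) 1, g (-x) = g x)
    (heq : ∀ x ∈ Set.Ioo (0 : ℝ) 1, g x + β * ∫ y in (x - 1)..1, g y = c) :
    ∃ g' g'' : ℝ → ℝ, ∀ x ∈ Set.Ioo (0 : ℝ) 1,
      HasDerivAt g (g' x) x ∧ HasDerivAt g' (g'' x) x ∧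
      g' x = β * g (1 - x) ∧ g'' x + (1 / 4) * g x = 0 := by
  have h1 : ∀ x ∈ Set.Ioo (0 : ℝ) 1, HasDerivAt g (β * g (1 - x)) x := by
    intro x hx
    obtain ⟨hx0, hx1⟩ := hx
    have hmem : x - 1 ∈ Set.Ioo (-1 : ℝ) 1 := ⟨by linarith, by linarith⟩
    have hint : IntervalIntegrable g volume (x - 1) 1 := by
      apply ContinuousOn.intervalIntegrable
      rw [Set.uIcc_of_le (by linarith)]
      exact hg_cont.mono (Set.Icc_subset_Icc_left (by linarith))
    have hopen : ContinuousOn g (Set.Ioo (-1 : ℝ) 1) := hg_cont.mono Set.Ioo_subset_Icc_self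
    have hF : HasDerivAt (fun u => ∫ y in u..1, g y) (-g (x - 1)) (x - 1) :=
      intervalIntegral.integral_hasDerivAt_left hint
        (hopen.stronglyMeasurableAtFilter isOpen_Ioo _ hmem)
        (hopen.continuousAt (isOpen_Ioo.mem_nhds hmem))
    have hG : HasDerivAt (fun u => c - β * ∫ y in (u - 1)..1, g y) (-(β * -g (x - 1))) x :=
      ((hF.comp_sub_const x 1).const_mul β).const_sub c
    have hev : g (x - 1) = g (1 - x) := by
      rw [← hg_even (1 - x) ⟨by linarith, by linarith⟩, neg_sub]
    have hval : -(β * -g (x - 1)) = β * g (1 - x) := by rw [hev]; ring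
    rw [hval] at hG
    refine hG.congr_of_eventuallyEq ?_
    filter_upwards [isOpen_Ioo.mem_nhds (show x ∈ Set.Ioo (0 : ℝ) 1 from ⟨hx0, hx1⟩)] with u hu
    linarith [heq u hu]
  refine ⟨fun x => β * g (1 - x), fun x => -(1 / 4) * g x, fun x hx => ⟨h1 x hx, ?_, rfl, by ring⟩⟩
  have h2 := ((h1 (1 - x) ⟨by linarith [hx.2], by linarith [hx.1]⟩).comp_const_sub 1 x).const_mul β
  have hv : β * -(β * g (1 - (1 - x))) = -(1 / 4) * g x := by
    rw [sub_sub_cancel]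
    rcases hβ with rfl | rfl <;> ring
  rwa [hv] at h2
end
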